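/- Let N ≥ 1 be an integer and s ∈ (0,1) with N > 2s. Let ρ : ℝ → ℝ be a smooth function with compact support contained in (−2,2), and let υ ∈ ℝ^N with υ ≠ 0. For μ > 0 define a[ρ](μ,υ) := ∬_{ℝ^N×ℝ^N} |ρ(|y|²) − ρ(|z|²)| · | |υ+μy|^{2s−N} − |υ+μz|^{2s−N} | / ( |z|^{N−2s} · |y−z|^{N+2s} ) dy dz. Then a[ρ](μ,υ) → 0 as μ → 0⁺. -/

import Mathlib

/-!
Write `α = N - 2s`, `β = N + 2s`, `c = ‖υ‖ / 2` and `g y = ρ (‖y‖ ^ 2)`. The power `‖x‖ ^ (-α)` is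
split as the truncation `(max ‖x‖ c) ^ (-α)` plus an error `excess` supported in `‖x‖ < c`.

* The truncation is bounded and Lipschitz, hence `s`-Hölder, so its increment between `υ + μ y` and
  `υ + μ z` is at most a constant times `μ ^ s ‖y - z‖ ^ s`. As `g` is bounded, Lipschitz and
  supported in the ball `B` of radius `2`, this part of the integrand is bounded by
  `C μ ^ s k (y - z) (1_B(z) ‖z‖ ^ (-α) + 1_B(y))` with `k w = min (1, ‖w‖) ‖w‖ ^ (-(N + s))`
  (`smooth_part`). All these functions are integrable, so the contribution is `O(μ ^ s)`.
* If `excess` at `υ + μ y` is nonzero then `‖y‖ > c / μ`; for small `μ` this gives `g y = 0`, so only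
  `z ∈ B` matters and `‖y - z‖ ^ (-β) ≤ C μ ^ β`. The same holds with `y` and `z` exchanged
  (`excess_fst`, `excess_snd`). Since `∫ excess (υ + μ y) dy = μ ^ (-N) ∫ excess`, the contribution
  is `O(μ ^ (2 s))`.

`pointwise_bound` collects these estimates; Tonelli's theorem and translation invariance do the rest.
-/

open MeasureTheory Filter
open scoped ENNReal Topology

noncomputable section

/-- The space `ℝ^N` with its Euclidean norm. -/
abbrev Vec (N : ℕ) := EuclideanSpace ℝ (Fin N)

/-- The indicator function of the open ball of radius `2` about the origin, which contains the
support of `y ↦ ρ (‖y‖ ^ 2)`. -/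
def cut {E : Type*} [Norm E] (x : E) : ℝ := if ‖x‖ < 2 then 1 else 0

/-- The Riesz-type weight `‖x‖ ^ (-α)` truncated to the ball of radius `2`. -/
def riesz {E : Type*} [Norm E] (α : ℝ) (x : E) : ℝ := cut x * ‖x‖ ^ (-α)

/-- The kernel `min (1, ‖w‖) ‖w‖ ^ (-γ)`. With `γ = N + s` it is integrable on `ℝ^N`: the factor
`min (1, ‖w‖)` tames the singularity at the origin. -/
def kern {E : Type*} [Norm E] (γ : ℝ) (w : E) : ℝ := min 1 ‖w‖ * ‖w‖ ^ (-γ)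

/-- The error made in replacing `‖x‖ ^ (-α)` by the bounded function `(max ‖x‖ a) ^ (-α)`; it
vanishes for `‖x‖ ≥ a`. (At `x = 0`, if `a > 0`, the convention `0 ^ (-α) = 0` makes it `a ^ (-α)`, which is
harmless.) -/
def excess {E : Type*} [Norm E] (α a : ℝ) (x : E) : ℝ :=
  |‖x‖ ^ (-α) - (max ‖x‖ a) ^ (-α)|

lemma cut_nonneg {E : Type*} [Norm E] (x : E) : 0 ≤ cut x := by
  unfold cut; split_ifs <;> norm_num

lemma riesz_nonneg {E : Type*} [SeminormedAddGroup E] (α : ℝ) (x : E) : 0 ≤ riesz α x :=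
  mul_nonneg (cut_nonneg x) (by positivity)

lemma kern_nonneg {E : Type*} [SeminormedAddGroup E] (γ : ℝ) (x : E) : 0 ≤ kern γ x := by
  unfold kern; positivity

lemma excess_nonneg {E : Type*} [Norm E] (α a : ℝ) (x : E) : 0 ≤ excess α a x :=
  abs_nonneg _

/-! ### Integrability and Tonelli computations -/

section integ
variable {N : ℕ}

lemma integrableOn_ball_rpow (hN : 1 ≤ N) {α : ℝ} (hα : α < N) (R : ℝ) :
    IntegrableOn (fun x : Vec N => ‖x‖ ^ (-α)) (Metric.ball 0 R) := by
  have : Nonempty (Fin N) := ⟨⟨0, hN⟩⟩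
  rcases le_or_gt R 0 with hR | hR
  · simp [Metric.ball_eq_empty.2 hR]
  rw [integrableOn_fun_norm_addHaar volume (f := fun r : ℝ => r ^ (-α))]
  have h : IntegrableOn (fun x : ℝ ↦ x ^ ((N : ℝ) - 1 - α)) (Set.Ioo (0 : ℝ) R) := by
    rw [intervalIntegral.integrableOn_Ioo_rpow_iff hR]; linarith
  refine h.congr_fun (fun x hx => ?_) measurableSet_Ioo
  simp only [finrank_euclideanSpace, Fintype.card_fin, smul_eq_mul]
  rw [← Real.rpow_natCast, ← Real.rpow_add hx.1, Nat.cast_sub hN]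
  congr 1; simp; ring

lemma integrable_cut : Integrable (fun x : Vec N => cut x) := by
  have h : Integrable ((Metric.ball (0 : Vec N) 2).indicator (fun _ => (1 : ℝ))) :=
    (integrable_indicator_iff measurableSet_ball).2 (by simp [measure_ball_lt_top])
  refine h.congr (Eventually.of_forall fun x => ?_)
  by_cases hx : ‖x‖ < 2 <;> simp [cut, hx]

lemma integrable_riesz (hN : 1 ≤ N) {α : ℝ} (hα : α < N) :
    Integrable (fun x : Vec N => riesz α x) := by
  have h := (integrable_indicator_iff measurableSet_ball).2
    (integrableOn_ball_rpow hN hα 2)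
  refine h.congr (Eventually.of_forall fun x => ?_)
  by_cases hx : ‖x‖ < 2 <;> simp [riesz, cut, hx]

lemma measurable_excess (α a : ℝ) : Measurable (fun x : Vec N => excess α a x) := by
  unfold excess
  fun_prop

lemma excess_eq_zero {E : Type*} [Norm E] {α a : ℝ} {x : E} (h : a ≤ ‖x‖) : excess α a x = 0 := by
  simp [excess, max_eq_left h]

lemma integrable_excess (hN : 1 ≤ N) {α : ℝ} (hα : α < N) (a : ℝ) :
    Integrable (fun x : Vec N => excess α a x) := by
  rcases le_or_gt a 0 with ha | ha
  · refine (integrable_zero (Vec N) ℝ volume).congr (Eventually.of_forall fun x => ?_)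
    simp [excess_eq_zero (ha.trans (norm_nonneg x))]
  have h : IntegrableOn (fun x : Vec N => ‖x‖ ^ (-α) - a ^ (-α)) (Metric.ball 0 a) :=
    (integrableOn_ball_rpow hN hα a).sub (by simp [measure_ball_lt_top])
  refine ((integrable_indicator_iff measurableSet_ball).2 h.norm).congr
    (Eventually.of_forall fun x => ?_)
  rcases lt_or_ge ‖x‖ a with hx | hx
  · simp [hx, excess, max_eq_right hx.le]
  · simp [hx.not_gt, excess_eq_zero hx]

lemma integrable_kern (hN : 1 ≤ N) {s : ℝ} (hs : s ∈ Set.Ioo (0 : ℝ) 1) :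
    Integrable (fun x : Vec N => kern (N + s) x) := by
  have : Nonempty (Fin N) := ⟨⟨0, hN⟩⟩
  have := integrable_fun_norm_addHaar (E := Vec N) volume
    (f := fun r : ℝ => min 1 r * r ^ (-((N : ℝ) + s)))
  refine this.2 ?_
  have hpow : ∀ r : ℝ, 0 < r → r ^ (N - 1) * r ^ (-((N : ℝ) + s)) = r ^ (-1 - s) := by
    intro r hr
    rw [← Real.rpow_natCast, ← Real.rpow_add hr, Nat.cast_sub hN]
    congr 1; simp; ring
  have hU : Set.Ioi (0 : ℝ) = Set.Ioo 0 2 ∪ Set.Ioi 1 := by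
    ext x; simp only [Set.mem_Ioi, Set.mem_union, Set.mem_Ioo]
    constructor
    · intro h; rcases lt_or_ge x 2 with h2 | h2
      · exact Or.inl ⟨h, h2⟩
      · right; linarith
    · rintro (h | h) <;> linarith
  have hm : Measurable (fun r : ℝ => r ^ (N - 1) * (min 1 r * r ^ (-((N : ℝ) + s)))) := by
    fun_prop
  simp only [finrank_euclideanSpace, Fintype.card_fin, smul_eq_mul]
  rw [hU]
  refine IntegrableOn.union ?_ ?_
  · have h : IntegrableOn (fun x : ℝ ↦ x ^ (-s)) (Set.Ioo (0 : ℝ) 2) := by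
      rw [intervalIntegral.integrableOn_Ioo_rpow_iff two_pos]; linarith [hs.2]
    refine h.mono' hm.aestronglyMeasurable
      ((ae_restrict_iff' measurableSet_Ioo).2 (Eventually.of_forall fun r hr => ?_))
    have hr0 := hr.1
    rw [Real.norm_of_nonneg (by positivity), mul_left_comm, hpow r hr0]
    calc min 1 r * r ^ (-1 - s) ≤ r * r ^ (-1 - s) := by gcongr; exact min_le_right _ _
      _ = r ^ (-s) := by
        nth_rewrite 1 [← Real.rpow_one r]
        rw [← Real.rpow_add hr0]; congr 1; ring
  · have h : IntegrableOn (fun x : ℝ ↦ x ^ (-1 - s)) (Set.Ioi (1 : ℝ)) :=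
      integrableOn_Ioi_rpow_of_lt (by linarith [hs.1]) one_pos
    refine h.mono' hm.aestronglyMeasurable
      ((ae_restrict_iff' measurableSet_Ioi).2 (Eventually.of_forall fun r hr => ?_))
    have hr0 : 0 < r := lt_trans one_pos hr
    rw [Real.norm_of_nonneg (by positivity), mul_left_comm, hpow r hr0]
    exact mul_le_of_le_one_left (by positivity) (min_le_left _ _)

lemma lintegral_conv_snd {k f : Vec N → ℝ≥0∞} (hk : Measurable k) (hf : Measurable f) :
    ∫⁻ p : Vec N × Vec N, k (p.1 - p.2) * f p.2 = (∫⁻ w, k w) * ∫⁻ z, f z := by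
  rw [Measure.volume_eq_prod, lintegral_prod_symm' _ (by fun_prop), ← lintegral_const_mul _ hf]
  refine lintegral_congr fun z => ?_
  dsimp only
  rw [lintegral_mul_const _ (by fun_prop), lintegral_sub_right_eq_self (fun w => k w) z]

lemma lintegral_conv_fst {k f : Vec N → ℝ≥0∞} (hk : Measurable k) (hf : Measurable f) :
    ∫⁻ p : Vec N × Vec N, k (p.1 - p.2) * f p.1 = (∫⁻ w, k w) * ∫⁻ z, f z := by
  rw [Measure.volume_eq_prod, lintegral_prod _ (by fun_prop), ← lintegral_const_mul _ hf]
  refine lintegral_congr fun z => ?_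
  dsimp only
  rw [lintegral_mul_const _ (by fun_prop), lintegral_sub_left_eq_self (fun w => k w) z]

/-- The change of variables `x = υ + μ y`. -/
lemma lintegral_affine {f : Vec N → ℝ≥0∞} (hf : Measurable f) (υ : Vec N) {μ : ℝ} (hμ : 0 < μ) :
    ∫⁻ y, f (υ + μ • y) = ENNReal.ofReal ((μ ^ N)⁻¹) * ∫⁻ x, f x := by
  have h := lintegral_map (μ := (volume : Measure (Vec N))) (f := fun x => f (υ + x))
    (g := fun y : Vec N => μ • y) (by fun_prop) (by fun_prop)
  rw [← h, Measure.map_addHaar_smul _ hμ.ne', lintegral_smul_measure,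
    lintegral_add_left_eq_self f υ, finrank_euclideanSpace, Fintype.card_fin,
    abs_of_pos (by positivity), smul_eq_mul]

end integ

/-! ### Regularity of the two increments -/

/-- The truncated power `r ↦ (max r a) ^ (-α)` is bounded and Lipschitz, hence `s`-Hölder. -/
lemma holder_trunc {α a s : ℝ} (hα : 0 < α) (ha : 0 < a) (hs : s ∈ Set.Ioo (0 : ℝ) 1) :
    ∃ C, 0 ≤ C ∧ ∀ r q : ℝ, |(max r a) ^ (-α) - (max q a) ^ (-α)| ≤ C * |r - q| ^ s := by
  have hlip : ∀ r q : ℝ,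
      |(max r a) ^ (-α) - (max q a) ^ (-α)| ≤ (α * a ^ (-α - 1)) * |r - q| := by
    intro r q
    have h := (convex_Ici a).norm_image_sub_le_of_norm_deriv_le
      (f := fun x : ℝ => x ^ (-α)) (C := α * a ^ (-α - 1)) (x := max q a) (y := max r a)
      (fun x hx => (Real.hasDerivAt_rpow_const
        (Or.inl (ha.trans_le hx).ne')).differentiableAt)
      (fun x hx => by
        have hx0 : 0 < x := ha.trans_le hx
        rw [Real.deriv_rpow_const, norm_mul, Real.norm_eq_abs, Real.norm_eq_abs, abs_neg,
          abs_of_pos hα, abs_of_pos (by positivity)]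
        exact mul_le_mul_of_nonneg_left
          (Real.rpow_le_rpow_of_nonpos ha hx (by linarith)) hα.le)
      (Set.mem_Ici.2 (le_max_right q a)) (Set.mem_Ici.2 (le_max_right r a))
    simp only [Real.norm_eq_abs] at h
    exact h.trans (mul_le_mul_of_nonneg_left (abs_max_sub_max_le_abs r q a) (by positivity))
  have hbd : ∀ r : ℝ, 0 ≤ (max r a) ^ (-α) ∧ (max r a) ^ (-α) ≤ a ^ (-α) := fun r =>
    ⟨Real.rpow_nonneg (ha.le.trans (le_max_right _ _)) _,
      Real.rpow_le_rpow_of_nonpos ha (le_max_right _ _) (by linarith)⟩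
  have hA : 0 ≤ a ^ (-α) := by positivity
  have hL : 0 ≤ α * a ^ (-α - 1) := by positivity
  refine ⟨a ^ (-α) + α * a ^ (-α - 1), by positivity, fun r q => ?_⟩
  -- Lipschitz bound for increments at most `1`, sup bound for larger ones
  rcases le_total |r - q| 1 with h1 | h1
  · calc _ ≤ (α * a ^ (-α - 1)) * |r - q| := hlip r q
      _ ≤ (α * a ^ (-α - 1)) * |r - q| ^ s := by
        gcongr
        exact Real.self_le_rpow_of_le_one (abs_nonneg _) h1 hs.2.le
      _ ≤ _ := by gcongr; linarith
  · calc _ ≤ a ^ (-α) := abs_sub_le_of_nonneg_of_le (hbd r).1 (hbd r).2 (hbd q).1 (hbd q).2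
      _ ≤ (a ^ (-α) + α * a ^ (-α - 1)) * 1 := by linarith
      _ ≤ _ := by gcongr; exact Real.one_le_rpow h1 hs.1.le

/-- `y ↦ ρ (‖y‖ ^ 2)` vanishes outside the ball of radius `2`, is bounded and is Lipschitz. -/
lemma profile_bound {E : Type*} [NormedAddCommGroup E] [InnerProductSpace ℝ E]
    [FiniteDimensional ℝ E] {ρ : ℝ → ℝ} (hρ : ContDiff ℝ (⊤ : ℕ∞) ρ)
    (hρsupp : tsupport ρ ⊆ Set.Ioo (-2 : ℝ) 2) :
    (∀ y : E, 2 ≤ ‖y‖ → ρ (‖y‖ ^ 2) = 0) ∧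
    ∃ D, 0 ≤ D ∧ ∀ y z : E, |ρ (‖y‖ ^ 2) - ρ (‖z‖ ^ 2)| ≤ D * min 1 ‖y - z‖ := by
  have h0 : ∀ y : E, 2 ≤ ‖y‖ → ρ (‖y‖ ^ 2) = 0 := by
    intro y hy
    refine image_eq_zero_of_notMem_tsupport fun h => ?_
    have := (hρsupp h).2
    nlinarith
  refine ⟨h0, ?_⟩
  have hc : HasCompactSupport (fun y : E => ρ (‖y‖ ^ 2)) := by
    refine HasCompactSupport.intro (isCompact_closedBall 0 2) fun y hy => h0 y ?_
    simp only [mem_closedBall_zero_iff, not_le] at hy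
    exact hy.le
  have hd : ContDiff ℝ (⊤ : ℕ∞) (fun y : E => ρ (‖y‖ ^ 2)) := hρ.comp (contDiff_norm_sq ℝ)
  obtain ⟨L, hL⟩ := ContDiff.lipschitzWith_of_hasCompactSupport hc hd (by simp)
  obtain ⟨M, hM⟩ := hc.exists_bound_of_continuous hd.continuous
  have hM0 : 0 ≤ M := (norm_nonneg _).trans (hM 0)
  refine ⟨2 * M + L, by positivity, fun y z => ?_⟩
  have h1 : |ρ (‖y‖ ^ 2) - ρ (‖z‖ ^ 2)| ≤ L * ‖y - z‖ := by
    simpa [dist_eq_norm] using hL.dist_le_mul y z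
  have h2 : |ρ (‖y‖ ^ 2) - ρ (‖z‖ ^ 2)| ≤ 2 * M := by
    have := abs_sub (ρ (‖y‖ ^ 2)) (ρ (‖z‖ ^ 2))
    have a1 := hM y
    have a2 := hM z
    simp only [Real.norm_eq_abs] at a1 a2
    linarith
  have hL0 : (0 : ℝ) ≤ L := L.2
  rcases le_total 1 ‖y - z‖ with h | h
  · rw [min_eq_left h]; linarith
  · rw [min_eq_right h]; nlinarith [norm_nonneg (y - z)]

/-! ### The pointwise bound -/

section pointwise
variable {E : Type*} [NormedAddCommGroup E] [NormedSpace ℝ E]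

/-- Contribution of the truncated power, whose increment `T` is Hölder small. Off the ball of
radius `2` the weight `‖z‖ ^ (-α)` is at most `1`, and one of `y`, `z` lies in that ball unless
`g y = g z = 0`. -/
lemma smooth_part {E : Type*} [NormedAddCommGroup E] {α β s C D μ : ℝ} {g : E → ℝ}
    (hα : 0 < α) (hμ : 0 < μ)
    (hD : 0 ≤ D) (hC : 0 ≤ C) {T : ℝ} {y z : E}
    (hT : T ≤ C * (μ * ‖y - z‖) ^ s) (hT0 : 0 ≤ T)
    (h0 : ∀ y, 2 ≤ ‖y‖ → g y = 0) (hg : |g y - g z| ≤ D * min 1 ‖y - z‖) :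
    |g y - g z| * T * (‖z‖ ^ (-α) * ‖y - z‖ ^ (-β)) ≤
      D * C * (μ ^ s * (kern (β - s) (y - z) * riesz α z + kern (β - s) (y - z) * cut y)) := by
  rcases eq_or_ne y z with rfl | hyz
  · simp [kern]
  have hw : 0 < ‖y - z‖ := norm_pos_iff.2 (sub_ne_zero.2 hyz)
  have hcut := cut_nonneg y
  have hr := riesz_nonneg α z
  have hk : kern (β - s) (y - z) = min 1 ‖y - z‖ * (‖y - z‖ ^ s * ‖y - z‖ ^ (-β)) := by
    rw [kern, ← Real.rpow_add hw]; congr 2; ring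
  have hk0 : 0 ≤ kern (β - s) (y - z) := by rw [hk]; positivity
  by_cases hB : 2 ≤ ‖y‖ ∧ 2 ≤ ‖z‖
  · rw [h0 y hB.1, h0 z hB.2]
    simp only [sub_self, abs_zero, zero_mul]
    positivity
  have hz : ‖z‖ ^ (-α) ≤ riesz α z + cut y := by
    rcases lt_or_ge ‖z‖ 2 with h | h
    · simpa [riesz, cut, h] using hcut
    · have hy : ‖y‖ < 2 := by
        by_contra hy; exact hB ⟨not_lt.1 hy, h⟩
      have : ‖z‖ ^ (-α) ≤ 1 :=
        Real.rpow_le_one_of_one_le_of_nonpos (by linarith) (by linarith)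
      simpa [riesz, cut, h.not_gt, hy] using this
  calc |g y - g z| * T * (‖z‖ ^ (-α) * ‖y - z‖ ^ (-β))
      ≤ (D * min 1 ‖y - z‖) * (C * (μ * ‖y - z‖) ^ s) *
        ((riesz α z + cut y) * ‖y - z‖ ^ (-β)) := by gcongr
    _ = D * C * (μ ^ s * (kern (β - s) (y - z) * (riesz α z + cut y))) := by
      rw [hk, Real.mul_rpow hμ.le hw.le]; ring
    _ = _ := by ring

/-- Points where the singularity of `‖υ + μ y‖ ^ (-α)` is felt are at distance of order `1 / μ`
from the origin. -/
lemma far_of_excess {α c μ : ℝ} {υ y : E} (hυ : ‖υ‖ = 2 * c) (hμ : 0 < μ)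
    (h : excess α c (υ + μ • y) ≠ 0) : c / μ < ‖y‖ := by
  have h1 : ‖υ + μ • y‖ < c := by
    by_contra h'; exact h (excess_eq_zero (not_lt.1 h'))
  have h2 : ‖υ‖ ≤ ‖υ + μ • y‖ + ‖μ • y‖ := norm_le_add_norm_add υ (μ • y)
  rw [norm_smul, Real.norm_of_nonneg hμ.le] at h2
  rw [div_lt_iff₀ hμ]
  linarith

lemma dist_rpow_bound {E : Type*} [NormedAddCommGroup E] {β c μ : ℝ} {y z : E} (hβ : 0 < β) (hc : 0 < c) (hμ : 0 < μ)
    (hμc : 4 * μ ≤ c) (hy : c / μ < ‖y‖) (hz : ‖z‖ < 2) :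
    ‖y - z‖ ^ (-β) ≤ (c / 2) ^ (-β) * μ ^ β := by
  have h4 : 4 ≤ c / μ := by rwa [le_div_iff₀ hμ]
  have h1 : ‖y‖ - ‖z‖ ≤ ‖y - z‖ := norm_sub_norm_le y z
  have h2 : c / 2 * μ⁻¹ ≤ ‖y - z‖ := by
    have : c / 2 * μ⁻¹ = c / μ / 2 := by ring
    linarith
  calc ‖y - z‖ ^ (-β) ≤ (c / 2 * μ⁻¹) ^ (-β) :=
        Real.rpow_le_rpow_of_nonpos (by positivity) h2 (by linarith)
    _ = _ := by
      rw [Real.mul_rpow (by positivity) (by positivity), Real.inv_rpow hμ.le,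
        Real.rpow_neg hμ.le, inv_inv]

/-- Contribution of the singularity in `y`: there `y` is far away, so `z` must lie in the ball
of radius `2` and `‖y - z‖ ^ (-β)` is of order `μ ^ β`. -/
lemma excess_fst {α β c D μ : ℝ} {g : E → ℝ} {υ y z : E} (hβ : 0 < β)
    (hc : 0 < c) (hυ : ‖υ‖ = 2 * c) (hμ : 0 < μ) (hμc : 4 * μ ≤ c)
    (h0 : ∀ y, 2 ≤ ‖y‖ → g y = 0) (hD : |g y - g z| ≤ D) :
    |g y - g z| * excess α c (υ + μ • y) * (‖z‖ ^ (-α) * ‖y - z‖ ^ (-β)) ≤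
      D * (c / 2) ^ (-β) * (μ ^ β * (excess α c (υ + μ • y) * riesz α z)) := by
  have hD0 : 0 ≤ D := (abs_nonneg _).trans hD
  have he0 : 0 ≤ excess α c (υ + μ • y) := abs_nonneg _
  rcases eq_or_ne (excess α c (υ + μ • y)) 0 with he | he
  · simp [he]
  have hy := far_of_excess hυ hμ he
  have h4 : 4 ≤ c / μ := by rwa [le_div_iff₀ hμ]
  rcases lt_or_ge ‖z‖ 2 with hz | hz
  · have hb := dist_rpow_bound hβ hc hμ hμc hy hz
    have hr : riesz α z = ‖z‖ ^ (-α) := by simp [riesz, cut, hz]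
    rw [hr]
    calc _ ≤ D * excess α c (υ + μ • y) * (‖z‖ ^ (-α) * ((c / 2) ^ (-β) * μ ^ β)) := by gcongr
      _ = _ := by ring
  · simp [h0 z hz, h0 y (by linarith), riesz, cut, hz.not_gt]

/-- Contribution of the singularity in `z`: the counterpart of `excess_fst` with the roles of
`y` and `z` exchanged, the weight `‖z‖ ^ (-α)` being at most `1`. -/
lemma excess_snd {α β c D μ : ℝ} {g : E → ℝ} {υ y z : E} (hα : 0 < α) (hβ : 0 < β)
    (hc : 0 < c) (hυ : ‖υ‖ = 2 * c) (hμ : 0 < μ) (hμc : 4 * μ ≤ c)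
    (h0 : ∀ y, 2 ≤ ‖y‖ → g y = 0) (hD : |g y - g z| ≤ D) :
    |g y - g z| * excess α c (υ + μ • z) * (‖z‖ ^ (-α) * ‖y - z‖ ^ (-β)) ≤
      D * (c / 2) ^ (-β) * (μ ^ β * (cut y * excess α c (υ + μ • z))) := by
  have hD0 : 0 ≤ D := (abs_nonneg _).trans hD
  have he0 : 0 ≤ excess α c (υ + μ • z) := abs_nonneg _
  rcases eq_or_ne (excess α c (υ + μ • z)) 0 with he | he
  · simp [he]
  have hz := far_of_excess hυ hμ he
  have h4 : 4 ≤ c / μ := by rwa [le_div_iff₀ hμ]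
  rcases lt_or_ge ‖y‖ 2 with hy | hy
  · have hb := dist_rpow_bound hβ hc hμ hμc hz hy
    rw [norm_sub_rev] at hb
    have hz1 : ‖z‖ ^ (-α) ≤ 1 :=
      Real.rpow_le_one_of_one_le_of_nonpos (by linarith) (by linarith)
    have hr : cut y = 1 := by simp [cut, hy]
    rw [hr]
    calc _ ≤ D * excess α c (υ + μ • z) * (1 * ((c / 2) ^ (-β) * μ ^ β)) := by gcongr
      _ = _ := by ring
  · simp [h0 y hy, h0 z (by linarith), cut, hy.not_gt]

/-- The integrand is dominated, uniformly for small `μ`, by a sum of products and convolution-type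
products of integrable functions with explicit powers of `μ` in front. -/
lemma pointwise_bound {α s c : ℝ} {β : ℝ} (hα : 0 < α) (hβ : 0 < β) (hc : 0 < c)
    (hs : s ∈ Set.Ioo (0 : ℝ) 1) {g : E → ℝ} {υ : E} (hυ : ‖υ‖ = 2 * c)
    (h0 : ∀ y, 2 ≤ ‖y‖ → g y = 0)
    (hD : ∃ D, 0 ≤ D ∧ ∀ y z : E, |g y - g z| ≤ D * min 1 ‖y - z‖) :
    ∃ C, 0 ≤ C ∧ ∀ μ : ℝ, 0 < μ → 4 * μ ≤ c → ∀ y z : E,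
      |g y - g z| * |‖υ + μ • y‖ ^ (-α) - ‖υ + μ • z‖ ^ (-α)| / (‖z‖ ^ α * ‖y - z‖ ^ β) ≤
        C * μ ^ s * (kern (β - s) (y - z) * riesz α z + kern (β - s) (y - z) * cut y) +
        C * μ ^ β * (excess α c (υ + μ • y) * riesz α z + cut y * excess α c (υ + μ • z)) := by
  obtain ⟨D, hD0, hD⟩ := hD
  obtain ⟨H, hH0, hH⟩ := holder_trunc hα hc hs
  refine ⟨D * H + D * (c / 2) ^ (-β), by positivity, fun μ hμ hμc y z => ?_⟩
  have hcut := cut_nonneg y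
  have hr := riesz_nonneg α z
  have he1 := excess_nonneg α c (υ + μ • y)
  have he2 := excess_nonneg α c (υ + μ • z)
  have hk := kern_nonneg (β - s) (y - z)
  set T := |(max ‖υ + μ • y‖ c) ^ (-α) - (max ‖υ + μ • z‖ c) ^ (-α)| with hTdef
  have hT : T ≤ H * (μ * ‖y - z‖) ^ s := by
    refine (hH _ _).trans ?_
    have h1 : |‖υ + μ • y‖ - ‖υ + μ • z‖| ≤ μ * ‖y - z‖ := by
      refine (abs_norm_sub_norm_le _ _).trans (le_of_eq ?_)
      rw [add_sub_add_left_eq_sub, ← smul_sub, norm_smul, Real.norm_of_nonneg hμ.le]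
    have := hs.1.le
    gcongr
  have hD1 : |g y - g z| ≤ D := (hD y z).trans (mul_le_of_le_one_right hD0 (min_le_left _ _))
  have hsplit : |‖υ + μ • y‖ ^ (-α) - ‖υ + μ • z‖ ^ (-α)| ≤
      T + excess α c (υ + μ • y) + excess α c (υ + μ • z) := by
    simp only [hTdef, excess]
    set p := ‖υ + μ • y‖ ^ (-α)
    set q := ‖υ + μ • z‖ ^ (-α)
    set p' := max ‖υ + μ • y‖ c ^ (-α)
    set q' := max ‖υ + μ • z‖ c ^ (-α)
    have e1 := abs_sub_le p p' q
    have e2 := abs_sub_le p' q' q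
    have e3 := abs_sub_comm q' q
    linarith
  have h1 := smooth_part (β := β) (s := s) hα hμ hD0 hH0 hT (abs_nonneg _) h0 (hD y z)
  have h2 := excess_fst (α := α) hβ hc hυ hμ hμc h0 hD1
  have h3 := excess_snd hα hβ hc hυ hμ hμc h0 hD1
  have hA : 0 ≤ μ ^ s * (kern (β - s) (y - z) * riesz α z + kern (β - s) (y - z) * cut y) := by
    positivity
  have hB : 0 ≤ μ ^ β * (excess α c (υ + μ • y) * riesz α z + cut y * excess α c (υ + μ • z)) := by
    positivity
  have hdiv : ∀ x : ℝ, x / (‖z‖ ^ α * ‖y - z‖ ^ β) = x * (‖z‖ ^ (-α) * ‖y - z‖ ^ (-β)) := by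
    intro x
    rw [Real.rpow_neg (norm_nonneg _), Real.rpow_neg (norm_nonneg _), ← mul_inv, div_eq_mul_inv]
  rw [hdiv]
  calc _ ≤ |g y - g z| * (T + excess α c (υ + μ • y) + excess α c (υ + μ • z)) *
        (‖z‖ ^ (-α) * ‖y - z‖ ^ (-β)) := by gcongr
    _ = |g y - g z| * T * (‖z‖ ^ (-α) * ‖y - z‖ ^ (-β)) +
        (|g y - g z| * excess α c (υ + μ • y) * (‖z‖ ^ (-α) * ‖y - z‖ ^ (-β)) +
        |g y - g z| * excess α c (υ + μ • z) * (‖z‖ ^ (-α) * ‖y - z‖ ^ (-β))) := by ring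
    _ ≤ _ := by
      have hx1 : 0 ≤ D * H := by positivity
      have hx2 : 0 ≤ D * (c / 2) ^ (-β) := by positivity
      have m1 := mul_nonneg hx2 hA
      have m2 := mul_nonneg hx1 hB
      refine (add_le_add h1 (add_le_add h2 h3)).trans ?_
      linear_combination m1 + m2

end pointwise

/-! ### The limit -/

/-- For `ρ` smooth with compact support in `(-2,2)` and `υ ≠ 0`, the quantity
`a[ρ](μ,υ)` tends to `0` as `μ → 0⁺`. -/
theorem statement0 (N : ℕ) (hN : 1 ≤ N) (s : ℝ) (hs : s ∈ Set.Ioo (0 : ℝ) 1)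
    (hNs : 2 * s < N)
    (ρ : ℝ → ℝ) (hρ : ContDiff ℝ (⊤ : ℕ∞) ρ) (hρc : HasCompactSupport ρ)
    (hρsupp : tsupport ρ ⊆ Set.Ioo (-2 : ℝ) 2)
    (υ : EuclideanSpace ℝ (Fin N)) (hυ : υ ≠ 0) :
    Tendsto (fun μ : ℝ =>
      ∫⁻ p : EuclideanSpace ℝ (Fin N) × EuclideanSpace ℝ (Fin N),
        ENNReal.ofReal
          (|ρ (‖p.1‖ ^ 2) - ρ (‖p.2‖ ^ 2)| *
            |‖υ + μ • p.1‖ ^ (2 * s - (N : ℝ)) - ‖υ + μ • p.2‖ ^ (2 * s - (N : ℝ))| /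
            (‖p.2‖ ^ ((N : ℝ) - 2 * s) * ‖p.1 - p.2‖ ^ ((N : ℝ) + 2 * s))))
      (𝓝[>] (0 : ℝ)) (𝓝 0) := by
  have hs0 := hs.1
  have hα : 0 < (N : ℝ) - 2 * s := by linarith
  have hαN : (N : ℝ) - 2 * s < N := by linarith
  have hβ : 0 < (N : ℝ) + 2 * s := by linarith
  have hc : 0 < ‖υ‖ / 2 := by have := norm_pos_iff.2 hυ; positivity
  obtain ⟨h0, hD⟩ := profile_bound (E := Vec N) hρ hρsupp
  obtain ⟨C, hC0, hC⟩ := pointwise_bound hα hβ hc hs (by ring : ‖υ‖ = 2 * (‖υ‖ / 2)) h0 hD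
  set c := ‖υ‖ / 2
  set α := (N : ℝ) - 2 * s with hαd
  set β := (N : ℝ) + 2 * s with hβd
  have hγ : β - s = N + s := by rw [hβd]; ring
  have hneg : 2 * s - (N : ℝ) = -α := by rw [hαd]; ring
  rw [hγ] at hC
  rw [hneg]
  let k : Vec N → ℝ≥0∞ := fun x => ENNReal.ofReal (kern (N + s) x)
  let φ : Vec N → ℝ≥0∞ := fun x => ENNReal.ofReal (riesz α x)
  let χ : Vec N → ℝ≥0∞ := fun x => ENNReal.ofReal (cut x)
  let b : Vec N → ℝ≥0∞ := fun x => ENNReal.ofReal (excess α c x)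
  have hχm' : Measurable (fun x : Vec N => cut x) :=
    Measurable.ite (measurableSet_lt measurable_norm measurable_const)
      measurable_const measurable_const
  have hχm : Measurable χ := hχm'.ennreal_ofReal
  have hφm : Measurable φ := by
    refine Measurable.ennreal_ofReal ?_
    unfold riesz; fun_prop
  have hkm : Measurable k := by
    refine Measurable.ennreal_ofReal ?_
    unfold kern; fun_prop
  have hbm : Measurable b := (measurable_excess α c).ennreal_ofReal
  have fin : ∀ f : Vec N → ℝ, Integrable f → ∫⁻ x, ENNReal.ofReal (f x) ≠ ⊤ := fun f hf =>
    hf.lintegral_lt_top.ne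
  have hkf : ∫⁻ x, k x ≠ ⊤ := fin _ (integrable_kern hN hs)
  have hφf : ∫⁻ x, φ x ≠ ⊤ := fin _ (integrable_riesz hN hαN)
  have hχf : ∫⁻ x, χ x ≠ ⊤ := fin _ integrable_cut
  have hbf : ∫⁻ x, b x ≠ ⊤ := fin _ (integrable_excess hN hαN c)
  set A := (∫⁻ x, k x) * (∫⁻ x, φ x) + (∫⁻ x, k x) * (∫⁻ x, χ x) with hA
  set B := (∫⁻ x, b x) * (∫⁻ x, φ x) + (∫⁻ x, χ x) * (∫⁻ x, b x) with hB
  have hAf : A ≠ ⊤ := ENNReal.add_ne_top.2 ⟨ENNReal.mul_ne_top hkf hφf, ENNReal.mul_ne_top hkf hχf⟩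
  have hBf : B ≠ ⊤ := ENNReal.add_ne_top.2 ⟨ENNReal.mul_ne_top hbf hφf, ENNReal.mul_ne_top hχf hbf⟩
  have hlim : ∀ t : ℝ, 0 < t → ∀ X : ℝ≥0∞, X ≠ ⊤ →
      Tendsto (fun μ : ℝ => ENNReal.ofReal (C * μ ^ t) * X) (𝓝[>] (0 : ℝ)) (𝓝 0) := by
    intro t ht X hX
    have h1 : Tendsto (fun μ : ℝ => C * μ ^ t) (𝓝[>] (0 : ℝ)) (𝓝 0) := by
      have h2 : ContinuousAt (fun μ : ℝ => C * μ ^ t) 0 :=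
        continuousAt_const.mul (Real.continuousAt_rpow_const 0 t (Or.inr ht.le))
      have h3 := h2.tendsto
      simp only [Real.zero_rpow ht.ne', mul_zero] at h3
      exact h3.mono_left nhdsWithin_le_nhds
    have h4 := ENNReal.tendsto_ofReal h1
    simpa using ENNReal.Tendsto.mul_const h4 (Or.inr hX)
  have hsum := (hlim s hs0 A hAf).add (hlim (2 * s) (by positivity) B hBf)
  rw [add_zero] at hsum
  refine tendsto_of_tendsto_of_tendsto_of_le_of_le' tendsto_const_nhds hsum
    (Eventually.of_forall fun _ => zero_le) ?_
  have hev : ∀ᶠ μ : ℝ in 𝓝[>] (0 : ℝ), μ ∈ Set.Ioo 0 (c / 4) :=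
    Ioo_mem_nhdsGT (by positivity)
  filter_upwards [hev] with μ hμ
  have hμ0 := hμ.1
  have hμc : 4 * μ ≤ c := by linarith [hμ.2]
  have hpt : ∀ p : Vec N × Vec N, ENNReal.ofReal
      (|ρ (‖p.1‖ ^ 2) - ρ (‖p.2‖ ^ 2)| * |‖υ + μ • p.1‖ ^ (-α) - ‖υ + μ • p.2‖ ^ (-α)| /
        (‖p.2‖ ^ α * ‖p.1 - p.2‖ ^ β)) ≤
      ENNReal.ofReal (C * μ ^ s) * (k (p.1 - p.2) * φ p.2 + k (p.1 - p.2) * χ p.1) +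
      ENNReal.ofReal (C * μ ^ β) * (b (υ + μ • p.1) * φ p.2 + χ p.1 * b (υ + μ • p.2)) := by
    intro p
    refine (ENNReal.ofReal_le_ofReal (hC μ hμ0 hμc p.1 p.2)).trans (le_of_eq ?_)
    have i1 := kern_nonneg (N + s) (p.1 - p.2)
    have i2 := riesz_nonneg α p.2
    have i3 := cut_nonneg p.1
    have i4 := excess_nonneg α c (υ + μ • p.1)
    have i5 := excess_nonneg α c (υ + μ • p.2)
    simp only [k, φ, χ, b]
    rw [ENNReal.ofReal_add (by positivity) (by positivity), ENNReal.ofReal_mul (by positivity),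
      ENNReal.ofReal_mul (p := C * μ ^ β) (by positivity),
      ENNReal.ofReal_add (by positivity) (by positivity),
      ENNReal.ofReal_add (by positivity) (by positivity),
      ENNReal.ofReal_mul i1, ENNReal.ofReal_mul i1, ENNReal.ofReal_mul i4, ENNReal.ofReal_mul i3]
  refine (lintegral_mono hpt).trans (le_of_eq ?_)
  rw [lintegral_add_left (by fun_prop), lintegral_const_mul _ (by fun_prop),
    lintegral_const_mul _ (by fun_prop), lintegral_add_left (by fun_prop),
    lintegral_add_left (by fun_prop), lintegral_conv_snd hkm hφm, lintegral_conv_fst hkm hχm]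
  congr 1
  have e1 : ∫⁻ p : Vec N × Vec N, b (υ + μ • p.1) * φ p.2 =
      ENNReal.ofReal ((μ ^ N)⁻¹) * ((∫⁻ x, b x) * ∫⁻ x, φ x) := by
    rw [Measure.volume_eq_prod, lintegral_prod_mul (f := fun y => b (υ + μ • y))
      (Measurable.aemeasurable (by fun_prop)) hφm.aemeasurable, lintegral_affine hbm υ hμ0, mul_assoc]
  have e2 : ∫⁻ p : Vec N × Vec N, χ p.1 * b (υ + μ • p.2) =
      ENNReal.ofReal ((μ ^ N)⁻¹) * ((∫⁻ x, χ x) * ∫⁻ x, b x) := by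
    rw [Measure.volume_eq_prod, lintegral_prod_mul (g := fun y => b (υ + μ • y)) hχm.aemeasurable
      (Measurable.aemeasurable (by fun_prop)), lintegral_affine hbm υ hμ0, mul_left_comm]
  -- the Jacobian `μ ^ (-N)` turns `μ ^ (N + 2 s)` into `μ ^ (2 s)`
  rw [e1, e2, ← mul_add, ← mul_assoc, ← ENNReal.ofReal_mul (by positivity)]
  congr 2
  rw [mul_assoc, hβd, Real.rpow_add hμ0, Real.rpow_natCast]
  field_simp
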